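/- For every η > 0 there exist δ₀ > 0 and μ > 0 such that for all δ ∈ (0, δ₀] and all h ∈ Z with ‖h − Φ_LSW * Φ_LSW‖_Z ≤ μ one has |1/Ĝ₁[h; δ] − ε_δ| ≤ η·ε_δ and |Ĝ₂[h; δ]/Ĝ₁[h; δ]² − ε̃_δ| ≤ η·ε̃_δ, where ε_δ := 1/(K₁^δ·R₀[Φ_LSW * Φ_LSW]) and ε̃_δ := ε_δ·K₂^δ/K₁^δ, with R₀[h] := ∫_{1/2}^1 ξ·a₀(ξ)·h(ξ)·exp(−∫_ξ^1 a₀(y)·b₀(y) dy) dξ. -/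

import Mathlib

/-!
Write `P_δ(z) = 1 + z − (λ_LSW − δ) z^(1/3)` for the denominator of `a_δ`. Since `b_δ = 1 + P_δ'`, the
integrand `a_δ b_δ = 1/P_δ + P_δ'/P_δ` integrates to an explicit logarithm plus `A_δ = ∫₀ 1/P_δ`
(`exp_ab`). Consequently (`GamHat_eq`)

  `Γ̂_i(ξ) = P_δ(ξ) exp(A_δ(ξ)) N_i(ξ)`,  `N_i(ξ) = ∫₀^ξ γ_i a_δ exp(−A_δ)`,

so that `Ĝ_i[h] / K_i = ∫₀¹ k_i(ξ) h(ξ) dξ` with the kernel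
`k_i(ξ) = ξ / P_δ(1) · exp(A_δ(ξ) − A_δ(1)) · N_i(ξ) / N_i(1)` (`Ghat_eq`), which takes values in
`[0, 1/P_0(1)]`.

As `δ → 0` the denominator acquires a double zero at `z = 1/2`, and the integral of `1/P_δ` over an
interval of length `√δ` next to `1/2` is at least of order `δ^(-1/2)` (`A_gap`). Hence for `ξ < 1/2` the
factor `exp(A_δ(ξ) − A_δ(1))` tends to `0`. For `ξ > 1/2` it tends to `exp(−∫_ξ^1 1/P_0)`, while
`N_i(1) − N_i(ξ) ≤ exp(−A_δ(ξ)) → 0` and `N_i(1)` is bounded below (`N_lower`), so the quotient of the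
`N_i` tends to `1`. Thus `k_i` converges to the weight of `R₀` on `(1/2, 1]` and to `0` on `[0, 1/2)`,
and dominated convergence gives `Ĝ_i[h] / K_i → R₀[Φ_LSW * Φ_LSW]`, uniformly for `h` close to
`Φ_LSW * Φ_LSW` in the sup norm on `[0, 1]` (`functional_unif`).

It remains to see that `R₀[Φ_LSW * Φ_LSW]` is positive (`Rzero_pos`): the profile is bounded, because
`a_0 b_0 ≥ 0` on `[1/4, 1/2)`, and positive on `[0, 1/2]`, so its self-convolution is bounded on
`[0, 1]` and positive on `(1/2, 1)`. Both relative errors are then continuous functions of the two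
ratios `Ĝ_i[h] / K_i`.
-/

open MeasureTheory Set Filter

/-- λ_LSW := 3 (1/2)^(2/3) -/
noncomputable def lamLSW : ℝ := 3 * (1/2 : ℝ) ^ ((2:ℝ)/3)

/-- a_δ(z) := 1/(1 + z − (λ_LSW − δ) z^(1/3)) -/
noncomputable def aF (δ z : ℝ) : ℝ := 1 / (1 + z - (lamLSW - δ) * z ^ ((1:ℝ)/3))

/-- b_δ(z) := 2 − (1/3)(λ_LSW − δ) z^(−2/3) -/
noncomputable def bF (δ z : ℝ) : ℝ := 2 - (1/3) * (lamLSW - δ) * z ^ (-(2:ℝ)/3)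

/-- ‖Φ‖_sup := sup_{0≤z≤1} |Φ(z)| -/
noncomputable def normSup (Φ : ℝ → ℝ) : ℝ := sSup ((fun z => |Φ z|) '' Icc (0:ℝ) 1)

/-- ‖Φ‖_tail := sup_{z≥1} |Φ(z)| e^{β₁ z} z^{β₂} -/
noncomputable def normTail (β₁ β₂ : ℝ) (Φ : ℝ → ℝ) : ℝ :=
  sSup ((fun z => |Φ z| * Real.exp (β₁ * z) * z ^ β₂) '' Ici (1:ℝ))

/-- ‖Φ‖_Z := ‖Φ‖_sup + ‖Φ‖_tail -/
noncomputable def normZ (β₁ β₂ : ℝ) (Φ : ℝ → ℝ) : ℝ := normSup Φ + normTail β₁ β₂ Φ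

/-- membership in the space Z: measurable with finite norm -/
def memZ (β₁ β₂ : ℝ) (Φ : ℝ → ℝ) : Prop :=
  Measurable Φ ∧ BddAbove ((fun z => |Φ z|) '' Icc (0:ℝ) 1) ∧
    BddAbove ((fun z => |Φ z| * Real.exp (β₁ * z) * z ^ β₂) '' Ici (1:ℝ))

/-- (Φ₁ * Φ₂)(z) := (1/2) ∫₀^z Φ₁(z−y) Φ₂(y) dy -/
noncomputable def conv (Φ₁ Φ₂ : ℝ → ℝ) (z : ℝ) : ℝ :=
  (1/2) * ∫ y in (0:ℝ)..z, Φ₁ (z - y) * Φ₂ y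

/-- unnormalized solution of the homogeneous ODE -/
noncomputable def psi0 (δ ε εt z : ℝ) : ℝ :=
  Real.exp (-∫ y in (0:ℝ)..z, aF δ y * (bF δ y - εt * y - ε))

/-- ψ(z; ε, ε̃, δ), normalized so that ∫₀¹ z ψ dz = 1 -/
noncomputable def psi (δ ε εt z : ℝ) : ℝ :=
  psi0 δ ε εt z / ∫ t in (0:ℝ)..1, t * psi0 δ ε εt t

/-- the smooth LSW self-similar profile -/
noncomputable def PhiLSW (z : ℝ) : ℝ :=
  if z ≤ 1/2 then
    Real.exp (-∫ y in (0:ℝ)..z, aF 0 y * bF 0 y) /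
      ∫ t in (0:ℝ)..(1/2 : ℝ), t * Real.exp (-∫ y in (0:ℝ)..t, aF 0 y * bF 0 y)
  else 0

/-- ρ_δ(ξ) := ξ a_δ(ξ) exp(−∫_ξ^1 a_δ b_δ) -/
noncomputable def rhoF (δ ξ : ℝ) : ℝ :=
  ξ * aF δ ξ * Real.exp (-∫ y in ξ..(1:ℝ), aF δ y * bF δ y)

/-- R_δ[h] := ∫₀¹ ρ_δ(ξ) h(ξ) dξ -/
noncomputable def Rdel (δ : ℝ) (h : ℝ → ℝ) : ℝ := ∫ ξ in (0:ℝ)..1, rhoF δ ξ * h ξ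

/-- R₀[h] := ∫_{1/2}^1 ξ a₀(ξ) h(ξ) exp(−∫_ξ^1 a₀ b₀) dξ -/
noncomputable def Rzero (h : ℝ → ℝ) : ℝ :=
  ∫ ξ in (1/2 : ℝ)..1, ξ * aF 0 ξ * h ξ * Real.exp (-∫ y in ξ..(1:ℝ), aF 0 y * bF 0 y)

/-- γ₁(z) = z, γ₂(z) = 1 -/
noncomputable def gamF (i : ℕ) (z : ℝ) : ℝ := if i = 1 then z else 1

/-- Γ_i(ξ; ε, ε̃, δ) -/
noncomputable def Gam (i : ℕ) (δ ε εt ξ : ℝ) : ℝ :=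
  ∫ z in (0:ℝ)..ξ, gamF i z * Real.exp (∫ y in z..ξ, aF δ y * (bF δ y - εt * y - ε))

/-- Γ̂_i(ξ; δ) := Γ_i(ξ; 0, 0, δ) -/
noncomputable def GamHat (i : ℕ) (δ ξ : ℝ) : ℝ := Gam i δ 0 0 ξ

/-- K_i^δ := Γ̂_i(1; δ) -/
noncomputable def Kc (i : ℕ) (δ : ℝ) : ℝ := GamHat i δ 1

/-- Ĝ_i[h; δ] := ∫₀¹ ξ a_δ(ξ) h(ξ) Γ̂_i(ξ; δ) dξ -/
noncomputable def Ghat (i : ℕ) (δ : ℝ) (h : ℝ → ℝ) : ℝ :=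
  ∫ ξ in (0:ℝ)..1, ξ * aF δ ξ * h ξ * GamHat i δ ξ

/-- G_i[h; ε, ε̃, δ] := ∫₀^∞ ξ a_δ(ξ) h(ξ) Γ_i(ξ; ε, ε̃, δ) dξ -/
noncomputable def Gfull (i : ℕ) (δ ε εt : ℝ) (h : ℝ → ℝ) : ℝ :=
  ∫ ξ in Ioi (0:ℝ), ξ * aF δ ξ * h ξ * Gam i δ ε εt ξ

/-! ### The denominator of `aF` -/

/-- The denominator `1 + z − (λ_LSW − δ) z^(1/3)` of `aF δ z`. -/
noncomputable def P (δ z : ℝ) : ℝ := 1 + z - (lamLSW - δ) * z ^ ((1:ℝ)/3)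

/-- The cube root of `1/2`, the position of the double zero of `P 0` in the variable `z^(1/3)`. -/
noncomputable def cc : ℝ := (1/2 : ℝ) ^ ((1:ℝ)/3)

lemma aF_eq (δ z : ℝ) : aF δ z = 1 / P δ z := rfl

lemma cc_pos : 0 < cc := by unfold cc; positivity

lemma cc_cube : cc ^ 3 = 1 / 2 := by
  unfold cc
  rw [← Real.rpow_natCast, ← Real.rpow_mul (by norm_num)]
  norm_num

lemma lam_eq : lamLSW = 3 * cc ^ 2 := by
  unfold lamLSW cc
  rw [← Real.rpow_natCast, ← Real.rpow_mul (by norm_num)]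
  norm_num

lemma cc_lower : 3 / 4 ≤ cc := by
  have h := cc_cube
  have h0 := cc_pos
  by_contra! hlt
  nlinarith [pow_lt_pow_left₀ hlt h0.le (by norm_num : 3 ≠ 0)]

lemma cc_upper : cc ≤ 1 := by
  have h := cc_cube
  have h0 := cc_pos
  by_contra! hlt
  nlinarith [pow_lt_pow_left₀ hlt zero_le_one (by norm_num : 3 ≠ 0)]

lemma cbrt_cube {z : ℝ} (hz : 0 ≤ z) : (z ^ ((1:ℝ)/3)) ^ 3 = z := by
  rw [← Real.rpow_natCast, ← Real.rpow_mul hz]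
  norm_num

lemma cbrt_nonneg {z : ℝ} (hz : 0 ≤ z) : 0 ≤ z ^ ((1:ℝ)/3) := Real.rpow_nonneg hz _

lemma P_eq (δ z : ℝ) : P δ z = P 0 z + δ * z ^ ((1:ℝ)/3) := by
  unfold P; ring

/-- The double zero of the denominator at `z = 1/2` when `δ = 0`. -/
lemma P_zero_eq {z : ℝ} (hz : 0 ≤ z) :
    P 0 z = (z ^ ((1:ℝ)/3) - cc) ^ 2 * (z ^ ((1:ℝ)/3) + 2 * cc) := by
  have h1 := cbrt_cube hz
  have h2 := cc_cube
  unfold P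
  rw [lam_eq]
  linear_combination (-1) * h1 - 2 * h2

lemma P_zero_pos {z : ℝ} (hz : 0 ≤ z) (hz2 : z ≠ 1 / 2) : 0 < P 0 z := by
  rw [P_zero_eq hz]
  have h0 := cbrt_nonneg hz
  have h1 := cc_pos
  have : z ^ ((1:ℝ)/3) - cc ≠ 0 := by
    intro h
    apply hz2
    rw [← cbrt_cube hz, ← cc_cube, sub_eq_zero.mp h]
  positivity

lemma P_zero_nonneg {z : ℝ} (hz : 0 ≤ z) : 0 ≤ P 0 z := by
  rw [P_zero_eq hz]
  have h0 := cbrt_nonneg hz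
  have h1 := cc_pos
  positivity

lemma P_zero_le {δ z : ℝ} (hδ : 0 ≤ δ) (hz : 0 ≤ z) : P 0 z ≤ P δ z := by
  rw [P_eq δ]
  nlinarith [mul_nonneg hδ (cbrt_nonneg hz)]

lemma P_pos {δ z : ℝ} (hδ : 0 < δ) (hz : 0 ≤ z) : 0 < P δ z := by
  by_cases h : z = 1 / 2
  · rw [P_eq]
    have h1 : 0 < z ^ ((1:ℝ)/3) := Real.rpow_pos_of_pos (by rw [h]; norm_num) _
    have := P_zero_nonneg hz
    positivity
  · exact (P_zero_pos hz h).trans_le (P_zero_le hδ.le hz)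

lemma cbrt_le_one {z : ℝ} (hz : 0 ≤ z) (hz1 : z ≤ 1) : z ^ ((1:ℝ)/3) ≤ 1 :=
  Real.rpow_le_one hz hz1 (by norm_num)

/-- The zero of `P 0` at `1/2` is at least quadratic. -/
lemma P_zero_upper {z : ℝ} (hz : 0 ≤ z) (hz1 : z ≤ 1) : P 0 z ≤ 48 * (z - 1 / 2) ^ 2 := by
  rw [P_zero_eq hz]
  have h0 := cbrt_nonneg hz
  have h1 := cbrt_le_one hz hz1
  have h2 := cbrt_cube hz
  have h3 := cc_cube
  have h4 := cc_lower
  have h5 := cc_upper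
  set u := z ^ ((1:ℝ)/3)
  have e : z - 1 / 2 = (u - cc) * (u ^ 2 + u * cc + cc ^ 2) := by
    rw [← h2, ← h3]; ring
  have hq : 1 / 4 ≤ u ^ 2 + u * cc + cc ^ 2 := by nlinarith
  have hq2 : 1 / 16 ≤ (u ^ 2 + u * cc + cc ^ 2) ^ 2 := by nlinarith
  rw [e, mul_pow]
  have hs : 0 ≤ (u - cc) ^ 2 := sq_nonneg _
  nlinarith [mul_le_mul_of_nonneg_left hq2 hs,
    mul_le_mul_of_nonneg_left (show u + 2 * cc ≤ 3 by linarith) hs]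

lemma P_near {δ z : ℝ} (hδ : 0 ≤ δ) (hz : 0 ≤ z) (hz1 : z ≤ 1) (hd : |z - 1 / 2| ≤ √δ) :
    P δ z ≤ 49 * δ := by
  rw [P_eq]
  have h1 := P_zero_upper hz hz1
  have h2 : (z - 1 / 2) ^ 2 ≤ δ := by
    rw [← Real.sq_sqrt hδ, ← sq_abs]
    exact pow_le_pow_left₀ (abs_nonneg _) hd 2
  nlinarith [mul_le_mul_of_nonneg_left (cbrt_le_one hz hz1) hδ]

lemma P_upper {δ z : ℝ} (hδ1 : δ ≤ 1) (hz : 0 ≤ z) (hz1 : z ≤ 1) : P δ z ≤ 3 := by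
  unfold P
  have h0 := cbrt_nonneg hz
  have h1 := cbrt_le_one hz hz1
  have h2 := cc_lower
  rw [lam_eq]
  nlinarith

lemma P_lower {δ z : ℝ} (hδ : 0 ≤ δ) (hz : 0 ≤ z) (hz1 : z ≤ 1 / 8) : 1 / 16 ≤ P δ z := by
  refine le_trans ?_ (P_zero_le hδ hz)
  rw [P_zero_eq hz]
  have h0 := cbrt_nonneg hz
  have h2 := cbrt_cube hz
  have h4 := cc_lower
  set u := z ^ ((1:ℝ)/3)
  have hu : u ≤ 1 / 2 := by
    by_contra! hlt
    nlinarith [pow_lt_pow_left₀ hlt (by norm_num) (by norm_num : 3 ≠ 0)]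
  have : 1 / 16 ≤ (u - cc) ^ 2 := by nlinarith
  nlinarith

lemma P_at_zero (δ : ℝ) : P δ 0 = 1 := by
  unfold P
  rw [Real.zero_rpow (by norm_num)]; ring

lemma P_cont (δ : ℝ) : Continuous (P δ) := by
  unfold P
  have : Continuous (fun z : ℝ => z ^ ((1:ℝ)/3)) := Real.continuous_rpow_const (by norm_num)
  fun_prop

lemma P_deriv (δ : ℝ) {z : ℝ} (hz : 0 < z) : HasDerivAt (P δ) (bF δ z - 1) z := by
  have h1 := (Real.hasDerivAt_rpow_const (x := z) (p := (1:ℝ)/3) (Or.inl hz.ne')).const_mul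
    (lamLSW - δ)
  have h2 := ((hasDerivAt_id z).const_add 1).sub h1
  refine h2.congr_deriv ?_
  unfold bF
  have : (1:ℝ)/3 - 1 = -2/3 := by norm_num
  rw [this]; ring

lemma aF_meas (δ : ℝ) : Measurable (aF δ) := by
  have : aF δ = fun z => 1 / P δ z := rfl
  rw [this]
  exact measurable_const.div (P_cont δ).measurable

lemma bF_meas (δ : ℝ) : Measurable (bF δ) := by
  unfold bF
  fun_prop

/-! ### Exponentials of the integral of `aF * bF` -/

lemma aF_contOn {δ : ℝ} {s : Set ℝ} (h : ∀ z ∈ s, 0 < P δ z) : ContinuousOn (aF δ) s :=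
  continuousOn_const.div (P_cont δ).continuousOn fun z hz => (h z hz).ne'

lemma aF_int {δ α β : ℝ} (hαβ : α ≤ β) (h : ∀ z ∈ Icc α β, 0 < P δ z) :
    IntervalIntegrable (aF δ) volume α β := by
  apply ContinuousOn.intervalIntegrable
  rw [uIcc_of_le hαβ]
  exact aF_contOn h

lemma bF_int (δ α β : ℝ) : IntervalIntegrable (bF δ) volume α β := by
  unfold bF
  exact intervalIntegrable_const.sub
    ((intervalIntegral.intervalIntegrable_rpow' (by norm_num)).const_mul _)

lemma ab_int {δ α β : ℝ} (hαβ : α ≤ β) (h : ∀ z ∈ Icc α β, 0 < P δ z) :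
    IntervalIntegrable (fun y => aF δ y * bF δ y) volume α β := by
  apply (bF_int δ α β).continuousOn_mul
  rw [uIcc_of_le hαβ]
  exact aF_contOn h

/-- Since `bF δ = 1 + P'`, the integrand is `1/P + P'/P`, whose second part is a logarithmic
derivative. -/
lemma exp_ab {δ α β : ℝ} (hα : 0 ≤ α) (hαβ : α ≤ β) (h : ∀ z ∈ Icc α β, 0 < P δ z) :
    Real.exp (∫ y in α..β, aF δ y * bF δ y)
      = P δ β / P δ α * Real.exp (∫ y in α..β, aF δ y) := by
  have hα' := h α (left_mem_Icc.2 hαβ)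
  have hβ' := h β (right_mem_Icc.2 hαβ)
  have i1 := aF_int hαβ h
  have i2 := (ab_int hαβ h).sub i1
  have key : ∫ y in α..β, (aF δ y * bF δ y - aF δ y) = Real.log (P δ β) - Real.log (P δ α) := by
    refine intervalIntegral.integral_eq_sub_of_hasDerivAt_of_le hαβ
      (f := fun y => Real.log (P δ y)) ?_ ?_ i2
    · exact (P_cont δ).continuousOn.log fun z hz => (h z hz).ne'
    · intro z hz
      have := (P_deriv δ (hα.trans_lt hz.1)).log (h z (Ioo_subset_Icc_self hz)).ne'
      refine this.congr_deriv ?_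
      rw [aF_eq]; ring
  rw [intervalIntegral.integral_sub (ab_int hαβ h) i1] at key
  have : ∫ y in α..β, aF δ y * bF δ y
      = (Real.log (P δ β) - Real.log (P δ α)) + ∫ y in α..β, aF δ y := by linarith
  rw [this, Real.exp_add, Real.exp_sub, Real.exp_log hα', Real.exp_log hβ']

/-! ### The kernel of `Ghat i δ h / Kc i δ` -/

/-- The primitive of `aF δ` vanishing at `0`. -/
noncomputable def A (δ x : ℝ) : ℝ := ∫ y in (0:ℝ)..x, aF δ y

/-- The mass of `γ_i` on `[0, ξ]` for the weight `a_δ exp(−A)`; up to factors independent of `i`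
this is `GamHat i δ ξ`. -/
noncomputable def N (i : ℕ) (δ ξ : ℝ) : ℝ :=
  ∫ z in (0:ℝ)..ξ, gamF i z * (aF δ z * Real.exp (-A δ z))

lemma aF_pos {δ z : ℝ} (hδ : 0 < δ) (hz : 0 ≤ z) : 0 < aF δ z := one_div_pos.2 (P_pos hδ hz)

lemma aF_int' {δ α β : ℝ} (hδ : 0 < δ) (hα : 0 ≤ α) (hαβ : α ≤ β) :
    IntervalIntegrable (aF δ) volume α β :=
  aF_int hαβ fun _ hz => P_pos hδ (hα.trans hz.1)

lemma A_sub {δ α β : ℝ} (hδ : 0 < δ) (hα : 0 ≤ α) (hαβ : α ≤ β) :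
    ∫ y in α..β, aF δ y = A δ β - A δ α := by
  unfold A
  rw [intervalIntegral.integral_interval_sub_left (aF_int' hδ le_rfl (hα.trans hαβ))
    (aF_int' hδ le_rfl hα)]

lemma A_mono {δ α β : ℝ} (hδ : 0 < δ) (hα : 0 ≤ α) (hαβ : α ≤ β) : A δ α ≤ A δ β := by
  rw [← sub_nonneg, ← A_sub hδ hα hαβ]
  exact intervalIntegral.integral_nonneg hαβ fun z hz => (aF_pos hδ (hα.trans hz.1)).le

lemma A_contOn {δ : ℝ} (hδ : 0 < δ) {β : ℝ} (hβ : 0 ≤ β) : ContinuousOn (A δ) (Icc 0 β) := by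
  have := intervalIntegral.continuousOn_primitive_interval' (aF_int' hδ le_rfl hβ)
    (left_mem_uIcc)
  rwa [uIcc_of_le hβ] at this

lemma A_deriv {δ : ℝ} (hδ : 0 < δ) {z : ℝ} (hz : 0 ≤ z) : HasDerivAt (A δ) (aF δ z) z := by
  refine intervalIntegral.integral_hasDerivAt_right (aF_int' hδ le_rfl hz)
    (aF_meas δ).stronglyMeasurable.stronglyMeasurableAtFilter ?_
  exact continuousAt_const.div (P_cont δ).continuousAt (P_pos hδ hz).ne'

lemma gamF_cont (i : ℕ) : Continuous (gamF i) := by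
  unfold gamF
  split_ifs <;> fun_prop

lemma gamF_ge (i : ℕ) {z : ℝ} (hz1 : z ≤ 1) : z ≤ gamF i z := by
  unfold gamF
  split_ifs <;> linarith

lemma gamF_le (i : ℕ) {z : ℝ} (hz1 : z ≤ 1) : gamF i z ≤ 1 := by
  unfold gamF
  split_ifs <;> linarith

lemma w_contOn {δ : ℝ} (hδ : 0 < δ) {β : ℝ} (hβ : 0 ≤ β) :
    ContinuousOn (fun z => aF δ z * Real.exp (-A δ z)) (Icc 0 β) :=
  (aF_contOn fun _ hz => P_pos hδ hz.1).mul (A_contOn hδ hβ).neg.rexp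

lemma w_int {δ : ℝ} (hδ : 0 < δ) {α β : ℝ} (hα : 0 ≤ α) (hαβ : α ≤ β) :
    IntervalIntegrable (fun z => aF δ z * Real.exp (-A δ z)) volume α β := by
  apply ContinuousOn.intervalIntegrable
  rw [uIcc_of_le hαβ]
  exact (w_contOn hδ (hα.trans hαβ)).mono (Icc_subset_Icc_left hα)

lemma Nint (i : ℕ) {δ : ℝ} (hδ : 0 < δ) {α β : ℝ} (hα : 0 ≤ α) (hαβ : α ≤ β) :
    IntervalIntegrable (fun z => gamF i z * (aF δ z * Real.exp (-A δ z))) volume α β :=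
  (w_int hδ hα hαβ).continuousOn_mul (gamF_cont i).continuousOn

lemma w_eq {δ : ℝ} (hδ : 0 < δ) {α β : ℝ} (hα : 0 ≤ α) (hαβ : α ≤ β) :
    ∫ z in α..β, aF δ z * Real.exp (-A δ z) = Real.exp (-A δ α) - Real.exp (-A δ β) := by
  have := intervalIntegral.integral_eq_sub_of_hasDerivAt_of_le hαβ
    (f := fun z => -Real.exp (-A δ z)) (f' := fun z => aF δ z * Real.exp (-A δ z))
    ((A_contOn hδ (hα.trans hαβ)).mono (Icc_subset_Icc_left hα)).neg.rexp.neg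
    (fun z hz => ((A_deriv hδ (hα.trans hz.1.le)).neg.exp.neg).congr_deriv (by simp; ring))
    (w_int hδ hα hαβ)
  rw [this]; ring

lemma N_sub (i : ℕ) {δ : ℝ} (hδ : 0 < δ) {ξ : ℝ} (h0 : 0 ≤ ξ) :
    N i δ 1 - N i δ ξ = ∫ z in ξ..1, gamF i z * (aF δ z * Real.exp (-A δ z)) := by
  unfold N
  rw [intervalIntegral.integral_interval_sub_left (Nint i hδ le_rfl zero_le_one)
    (Nint i hδ le_rfl h0)]

lemma N_sub_nonneg (i : ℕ) {δ : ℝ} (hδ : 0 < δ) {ξ : ℝ} (h0 : 0 ≤ ξ) (h1 : ξ ≤ 1) :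
    0 ≤ N i δ 1 - N i δ ξ := by
  rw [N_sub i hδ h0]
  refine intervalIntegral.integral_nonneg h1 fun z hz => ?_
  have hz0 := h0.trans hz.1
  exact mul_nonneg (hz0.trans (gamF_ge i hz.2))
    (mul_nonneg (aF_pos hδ hz0).le (Real.exp_pos _).le)

lemma N_sub_le (i : ℕ) {δ : ℝ} (hδ : 0 < δ) {ξ : ℝ} (h0 : 0 ≤ ξ) (h1 : ξ ≤ 1) :
    N i δ 1 - N i δ ξ ≤ Real.exp (-A δ ξ) := by
  rw [N_sub i hδ h0]
  refine (intervalIntegral.integral_mono_on h1 (Nint i hδ h0 h1) (w_int hδ h0 h1)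
    fun z hz => ?_).trans ?_
  · exact mul_le_of_le_one_left
      (mul_nonneg (aF_pos hδ (h0.trans hz.1)).le (Real.exp_pos _).le) (gamF_le i hz.2)
  · rw [w_eq hδ h0 h1]
    linarith [Real.exp_pos (-A δ 1)]

lemma N_nonneg (i : ℕ) {δ : ℝ} (hδ : 0 < δ) {ξ : ℝ} (h0 : 0 ≤ ξ) (h1 : ξ ≤ 1) :
    0 ≤ N i δ ξ := by
  refine intervalIntegral.integral_nonneg h0 fun z hz => ?_
  exact mul_nonneg (hz.1.trans (gamF_ge i (hz.2.trans h1)))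
    (mul_nonneg (aF_pos hδ hz.1).le (Real.exp_pos _).le)

/-- A lower bound for the total mass, uniform in `δ`, coming from `[0, 1/8]`, where the denominator
stays away from `0`. -/
lemma N_lower (i : ℕ) {δ : ℝ} (hδ : 0 < δ) (hδ1 : δ ≤ 1) :
    Real.exp (-2) / 384 ≤ N i δ 1 := by
  have hA : ∀ z ∈ Icc (0:ℝ) (1/8), A δ z ≤ 2 := by
    intro z hz
    have hb : ∀ y ∈ Icc (0:ℝ) z, aF δ y ≤ 16 := by
      intro y hy
      have := P_lower hδ.le hy.1 (hy.2.trans hz.2)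
      rw [aF_eq, div_le_iff₀ (by linarith)]; linarith
    have := intervalIntegral.integral_mono_on hz.1 (aF_int' hδ le_rfl hz.1)
      (intervalIntegrable_const (c := (16:ℝ))) hb
    rw [intervalIntegral.integral_const, smul_eq_mul] at this
    unfold A
    linarith [hz.2]
  have h8 : N i δ (1/8) ≤ N i δ 1 := by
    linarith [N_sub_nonneg i hδ (show (0:ℝ) ≤ 1/8 by norm_num) (by norm_num)]
  refine le_trans ?_ h8
  have hint : ∫ z in (0:ℝ)..(1/8), z * (1 / 3 * Real.exp (-2)) = Real.exp (-2) / 384 := by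
    rw [intervalIntegral.integral_mul_const, integral_id]; ring
  rw [← hint]
  unfold N
  refine intervalIntegral.integral_mono_on (by norm_num)
    (Continuous.intervalIntegrable (by fun_prop) _ _) (Nint i hδ le_rfl (by norm_num))
    fun z hz => ?_
  have hz1 : z ≤ 1 := by linarith [hz.2]
  have ha : 1 / 3 ≤ aF δ z := one_div_le_one_div_of_le (P_pos hδ hz.1) (P_upper hδ1 hz.1 hz1)
  have he : Real.exp (-2) ≤ Real.exp (-A δ z) := Real.exp_le_exp.2 (by linarith [hA z hz])
  exact mul_le_mul (gamF_ge i hz1) (mul_le_mul ha he (Real.exp_pos _).le (by linarith))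
    (by positivity) (hz.1.trans (gamF_ge i hz1))

lemma N_one_pos (i : ℕ) {δ : ℝ} (hδ : 0 < δ) (hδ1 : δ ≤ 1) : 0 < N i δ 1 :=
  lt_of_lt_of_le (by positivity) (N_lower i hδ hδ1)

/-- By `exp_ab` the integrand of `GamHat` factorizes, the dependence on `ξ` leaving the integral. -/
lemma GamHat_eq (i : ℕ) {δ : ℝ} (hδ : 0 < δ) {ξ : ℝ} (h0 : 0 ≤ ξ) :
    GamHat i δ ξ = P δ ξ * Real.exp (A δ ξ) * N i δ ξ := by
  unfold GamHat Gam N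
  rw [← intervalIntegral.integral_const_mul]
  refine intervalIntegral.integral_congr fun z hz => ?_
  rw [uIcc_of_le h0] at hz
  have h := exp_ab hz.1 hz.2 fun y hy => P_pos hδ (hz.1.trans hy.1)
  simp only [zero_mul, sub_zero]
  rw [h, A_sub hδ hz.1 hz.2, Real.exp_sub, Real.exp_neg, aF_eq]
  field_simp

lemma Kc_pos (i : ℕ) {δ : ℝ} (hδ : 0 < δ) (hδ1 : δ ≤ 1) : 0 < Kc i δ := by
  unfold Kc
  rw [GamHat_eq i hδ zero_le_one]
  have := N_one_pos i hδ hδ1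
  have := P_pos hδ zero_le_one
  positivity

/-- The kernel representing the functional `h ↦ Ghat i δ h / Kc i δ`. -/
noncomputable def kerG (i : ℕ) (δ ξ : ℝ) : ℝ :=
  ξ / P δ 1 * Real.exp (A δ ξ - A δ 1) * (N i δ ξ / N i δ 1)

lemma Ghat_eq (i : ℕ) {δ : ℝ} (hδ : 0 < δ) (hδ1 : δ ≤ 1) (h : ℝ → ℝ) :
    Ghat i δ h = Kc i δ * ∫ ξ in (0:ℝ)..1, kerG i δ ξ * h ξ := by
  unfold Ghat Kc
  rw [← intervalIntegral.integral_const_mul]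
  refine intervalIntegral.integral_congr fun ξ hξ => ?_
  rw [uIcc_of_le zero_le_one] at hξ
  have h1 := N_one_pos i hδ hδ1
  have h2 := P_pos hδ zero_le_one
  have h3 := P_pos hδ hξ.1
  simp only [kerG]
  rw [GamHat_eq i hδ hξ.1, GamHat_eq i hδ zero_le_one, aF_eq, Real.exp_sub]
  field_simp

lemma kerG_nonneg (i : ℕ) {δ : ℝ} (hδ : 0 < δ) (hδ1 : δ ≤ 1) {ξ : ℝ} (hξ : ξ ∈ Icc (0:ℝ) 1) :
    0 ≤ kerG i δ ξ := by
  have h1 := N_one_pos i hδ hδ1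
  have h2 := P_pos hδ zero_le_one
  have h3 := N_nonneg i hδ hξ.1 hξ.2
  have h4 := hξ.1
  unfold kerG
  positivity

lemma kerG_le_exp (i : ℕ) {δ : ℝ} (hδ : 0 < δ) (hδ1 : δ ≤ 1) {ξ : ℝ} (hξ : ξ ∈ Icc (0:ℝ) 1) :
    kerG i δ ξ ≤ 1 / P 0 1 * Real.exp (A δ ξ - A δ 1) := by
  have h1 := N_one_pos i hδ hδ1
  have h2 := P_pos hδ zero_le_one
  have h3 := N_nonneg i hδ hξ.1 hξ.2
  have h4 := N_sub_nonneg i hδ hξ.1 hξ.2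
  have h5 : 0 < P 0 1 := P_zero_pos zero_le_one (by norm_num)
  have h6 : ξ / P δ 1 ≤ 1 / P 0 1 :=
    div_le_div₀ zero_le_one hξ.2 h5 (P_zero_le hδ.le zero_le_one)
  have h7 : N i δ ξ / N i δ 1 ≤ 1 := (div_le_one h1).2 (by linarith)
  unfold kerG
  have h8 := hξ.1
  have h9 := mul_le_mul_of_nonneg_right h6 (Real.exp_pos (A δ ξ - A δ 1)).le
  exact (mul_le_of_le_one_right (by positivity) h7).trans h9

lemma kerG_le (i : ℕ) {δ : ℝ} (hδ : 0 < δ) (hδ1 : δ ≤ 1) {ξ : ℝ} (hξ : ξ ∈ Icc (0:ℝ) 1) :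
    kerG i δ ξ ≤ 1 / P 0 1 := by
  have h5 : 0 < P 0 1 := P_zero_pos zero_le_one (by norm_num)
  refine (kerG_le_exp i hδ hδ1 hξ).trans (mul_le_of_le_one_right (by positivity) ?_)
  rw [Real.exp_le_one_iff]
  linarith [A_mono hδ hξ.1 hξ.2]

/-- Measurability of an interval integral with variable endpoint and parameter; no integrability is
needed, as the set where the Bochner integral takes its default value is measurable as well. -/
lemma meas_primitive (a : ℝ) {F : ℝ → ℝ → ℝ} (hF : Measurable (Function.uncurry F)) :
    Measurable fun z => ∫ y in a..z, F z y := by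
  have h1 : MeasurableSet {p : ℝ × ℝ | a < p.2 ∧ p.2 ≤ p.1} :=
    (measurableSet_lt measurable_const measurable_snd).inter
      (measurableSet_le measurable_snd measurable_fst)
  have h2 : MeasurableSet {p : ℝ × ℝ | p.1 < p.2 ∧ p.2 ≤ a} :=
    (measurableSet_lt measurable_fst measurable_snd).inter
      (measurableSet_le measurable_snd measurable_const)
  have e : (fun z => ∫ y in a..z, F z y) = fun z =>
      (∫ y, {p : ℝ × ℝ | a < p.2 ∧ p.2 ≤ p.1}.indicator (Function.uncurry F) (z, y)) -
      ∫ y, {p : ℝ × ℝ | p.1 < p.2 ∧ p.2 ≤ a}.indicator (Function.uncurry F) (z, y) := by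
    funext z
    rw [intervalIntegral, ← integral_indicator measurableSet_Ioc,
      ← integral_indicator measurableSet_Ioc]
    rfl
  rw [e]
  exact ((hF.indicator h1).stronglyMeasurable.integral_prod_right'.measurable).sub
    ((hF.indicator h2).stronglyMeasurable.integral_prod_right'.measurable)

lemma meas_primitive' (a : ℝ) {f : ℝ → ℝ} (hf : Measurable f) :
    Measurable fun z => ∫ y in a..z, f y :=
  meas_primitive a (F := fun _ y => f y) (hf.comp measurable_snd)

lemma A_meas (δ : ℝ) : Measurable (A δ) := meas_primitive' 0 (aF_meas δ)

lemma N_meas (i : ℕ) (δ : ℝ) : Measurable (N i δ) :=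
  meas_primitive' 0 ((gamF_cont i).measurable.mul ((aF_meas δ).mul (A_meas δ).neg.exp))

lemma kerG_meas (i : ℕ) (δ : ℝ) : Measurable (kerG i δ) := by
  unfold kerG
  exact ((measurable_id.div_const _).mul ((A_meas δ).sub_const _).exp).mul
    ((N_meas i δ).div_const _)

/-! ### The limit `δ → 0` -/

/-- The integral of `aF δ` over an interval of length `√δ` next to `1/2` is at least of order `δ^(-1/2)`. -/
lemma A_gap {δ α : ℝ} (hδ : 0 < δ) (hα : 0 ≤ α) (hα1 : α + √δ ≤ 1)
    (h : ∀ z ∈ Icc α (α + √δ), |z - 1 / 2| ≤ √δ) :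
    1 / (49 * √δ) ≤ A δ (α + √δ) - A δ α := by
  have hs : 0 < √δ := Real.sqrt_pos.2 hδ
  have hle : α ≤ α + √δ := by linarith
  rw [← A_sub hδ hα hle]
  have := intervalIntegral.integral_mono_on hle
    (intervalIntegrable_const (c := 1 / (49 * δ))) (aF_int' hδ hα hle) fun z hz => by
      have hz0 := hα.trans hz.1
      exact one_div_le_one_div_of_le (P_pos hδ hz0)
        (P_near hδ.le hz0 (hz.2.trans hα1) (h z hz))
  refine le_trans (le_of_eq ?_) this
  rw [intervalIntegral.integral_const, smul_eq_mul]
  have h2 : δ = √δ * √δ := (Real.mul_self_sqrt hδ.le).symm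
  rw [show α + √δ - α = √δ by ring]
  nth_rewrite 3 [h2]
  field_simp

lemma sqrt_le_half {δ : ℝ} (hδ1 : δ ≤ 1 / 4) : √δ ≤ 1 / 2 := by
  rw [Real.sqrt_le_left (by norm_num)]; linarith

lemma A_gap_left {δ ξ : ℝ} (hδ : 0 < δ) (hδ1 : δ ≤ 1 / 4) (hξ : 1 / 2 ≤ ξ) :
    1 / (49 * √δ) ≤ A δ ξ := by
  have hs := sqrt_le_half hδ1
  have hs0 := Real.sqrt_nonneg δ
  have h0 : (0:ℝ) ≤ 1 / 2 - √δ := by linarith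
  have h1 := A_gap (α := 1 / 2 - √δ) hδ h0 (by linarith) fun z hz => by
    rw [abs_le]; constructor <;> linarith [hz.1, hz.2]
  have h2 := A_mono hδ le_rfl h0
  have h3 : A δ 0 = 0 := by simp [A]
  have h4 := A_mono hδ (show (0:ℝ) ≤ 1 / 2 by norm_num) hξ
  rw [sub_add_cancel] at h1
  linarith

lemma A_gap_right {δ ξ : ℝ} (hδ : 0 < δ) (hδ1 : δ ≤ 1 / 4) (hξ0 : 0 ≤ ξ) (hξ : ξ ≤ 1 / 2) :
    1 / (49 * √δ) ≤ A δ 1 - A δ ξ := by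
  have hs := sqrt_le_half hδ1
  have hs0 := Real.sqrt_nonneg δ
  have h1 := A_gap (α := 1 / 2) hδ (by norm_num) (by linarith) fun z hz => by
    rw [abs_le]; constructor <;> linarith [hz.1, hz.2]
  have h2 := A_mono hδ (show 0 ≤ 1 / 2 + √δ by linarith) (show 1 / 2 + √δ ≤ 1 by linarith)
  have h4 := A_mono hδ hξ0 hξ
  linarith

lemma gap_tendsto :
    Tendsto (fun δ : ℝ => Real.exp (-(1 / (49 * √δ)))) (nhdsWithin 0 (Ioi 0)) (nhds 0) := by
  refine Real.tendsto_exp_neg_atTop_nhds_zero.comp ?_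
  have h1 : Tendsto (fun δ : ℝ => 49 * √δ) (nhdsWithin 0 (Ioi 0)) (nhdsWithin 0 (Ioi 0)) := by
    refine tendsto_nhdsWithin_iff.2 ⟨?_, ?_⟩
    · have : Continuous fun δ : ℝ => 49 * √δ := by fun_prop
      simpa using (this.tendsto 0).mono_left nhdsWithin_le_nhds
    · filter_upwards [self_mem_nhdsWithin] with δ hδ
      exact mul_pos (by norm_num) (Real.sqrt_pos.2 hδ)
  simp only [one_div]
  exact tendsto_inv_nhdsGT_zero.comp h1

lemma small_ev {c : ℝ} (hc : 0 < c) : ∀ᶠ δ in nhdsWithin (0:ℝ) (Ioi 0), 0 < δ ∧ δ ≤ c := by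
  filter_upwards [Ioc_mem_nhdsGT hc] with δ hδ using hδ

lemma N_ratio_tendsto (i : ℕ) {ξ : ℝ} (hξ : ξ ∈ Ioc (1 / 2 : ℝ) 1) :
    Tendsto (fun δ => N i δ ξ / N i δ 1) (nhdsWithin 0 (Ioi 0)) (nhds 1) := by
  have h0 : (0:ℝ) ≤ ξ := by linarith [hξ.1]
  have hl : Tendsto (fun δ : ℝ => 1 - Real.exp (-(1 / (49 * √δ))) / (Real.exp (-2) / 384))
      (nhdsWithin 0 (Ioi 0)) (nhds 1) := by
    simpa using (gap_tendsto.div_const (Real.exp (-2) / 384)).const_sub 1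
  refine tendsto_of_tendsto_of_tendsto_of_le_of_le' hl tendsto_const_nhds ?_ ?_
  · filter_upwards [small_ev (show (0:ℝ) < 1 / 4 by norm_num)] with δ ⟨hδ, hδ1⟩
    have hd1 : δ ≤ 1 := by linarith
    have hN := N_one_pos i hδ hd1
    have h1 := N_sub_le i hδ h0 hξ.2
    have h2 : Real.exp (-A δ ξ) ≤ Real.exp (-(1 / (49 * √δ))) :=
      Real.exp_le_exp.2 (neg_le_neg (A_gap_left hδ hδ1 hξ.1.le))
    have h3 : (N i δ 1 - N i δ ξ) / N i δ 1
        ≤ Real.exp (-(1 / (49 * √δ))) / (Real.exp (-2) / 384) :=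
      div_le_div₀ (Real.exp_pos _).le (h1.trans h2) (by positivity) (N_lower i hδ hd1)
    rw [sub_div, div_self hN.ne'] at h3
    linarith
  · filter_upwards [small_ev (show (0:ℝ) < 1 / 4 by norm_num)] with δ ⟨hδ, hδ1⟩
    rw [div_le_one (N_one_pos i hδ (by linarith))]
    linarith [N_sub_nonneg i hδ h0 hξ.2]

lemma aF0_int {ξ : ℝ} (hξ : ξ ∈ Ioc (1 / 2 : ℝ) 1) : IntervalIntegrable (aF 0) volume ξ 1 :=
  aF_int hξ.2 fun z hz => P_zero_pos (by linarith [hξ.1, hz.1]) (by linarith [hξ.1, hz.1])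

lemma aF_tail_tendsto {ξ : ℝ} (hξ : ξ ∈ Ioc (1 / 2 : ℝ) 1) :
    Tendsto (fun δ => ∫ y in ξ..1, aF δ y) (nhdsWithin 0 (Ioi 0))
      (nhds (∫ y in ξ..1, aF 0 y)) := by
  have hP : ∀ y ∈ uIoc ξ 1, 0 ≤ y ∧ 0 < P 0 y := fun y hy => by
    rw [uIoc_of_le hξ.2] at hy
    have : 1 / 2 < y := hξ.1.trans hy.1
    exact ⟨by linarith, P_zero_pos (by linarith) this.ne'⟩
  refine intervalIntegral.tendsto_integral_filter_of_dominated_convergence (aF 0)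
    (Eventually.of_forall fun δ => (aF_meas δ).aestronglyMeasurable) ?_ (aF0_int hξ) ?_
  · filter_upwards [self_mem_nhdsWithin] with δ hδ
    refine Eventually.of_forall fun y hy => ?_
    have hδ : 0 < δ := hδ
    rw [Real.norm_of_nonneg (aF_pos hδ (hP y hy).1).le]
    exact one_div_le_one_div_of_le (hP y hy).2 (P_zero_le hδ.le (hP y hy).1)
  · refine Eventually.of_forall fun y hy => ?_
    have hc : Continuous fun δ => P δ y := by unfold P; fun_prop
    exact (tendsto_const_nhds.div (hc.tendsto 0) (hP y hy).2.ne').mono_left nhdsWithin_le_nhds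

/-- The weight in `Rzero`, written without `bF`. -/
noncomputable def rho0 (ξ : ℝ) : ℝ := ξ / P 0 1 * Real.exp (-∫ y in ξ..(1:ℝ), aF 0 y)

/-- To the right of `1/2` the total mass `N i δ 1` concentrates on `[0, ξ]`, and the exponential
converges because `[ξ, 1]` avoids the zero of `P 0`. -/
lemma kerG_tendsto_right (i : ℕ) {ξ : ℝ} (hξ : ξ ∈ Ioc (1 / 2 : ℝ) 1) :
    Tendsto (fun δ => kerG i δ ξ) (nhdsWithin 0 (Ioi 0)) (nhds (rho0 ξ)) := by
  have hc : Continuous fun δ => P δ 1 := by unfold P; fun_prop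
  have hP : P 0 1 ≠ 0 := (P_zero_pos zero_le_one (by norm_num)).ne'
  have h1 : Tendsto (fun δ => ξ / P δ 1) (nhdsWithin 0 (Ioi 0)) (nhds (ξ / P 0 1)) :=
    (tendsto_const_nhds.div (hc.tendsto 0) hP).mono_left nhdsWithin_le_nhds
  have h2 := (Real.continuous_exp.tendsto _).comp (aF_tail_tendsto hξ).neg
  have h3 := (h1.mul h2).mul (N_ratio_tendsto i hξ)
  rw [mul_one] at h3
  refine h3.congr' ?_
  filter_upwards [self_mem_nhdsWithin] with δ hδ
  simp only [kerG, Function.comp]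
  rw [A_sub hδ (by linarith [hξ.1]) hξ.2, neg_sub]

/-- To the left of `1/2` the interval `[ξ, 1]` contains the singularity, so the exponential decays. -/
lemma kerG_tendsto_left (i : ℕ) {ξ : ℝ} (hξ : ξ ∈ Icc (0 : ℝ) (1 / 2)) :
    Tendsto (fun δ => kerG i δ ξ) (nhdsWithin 0 (Ioi 0)) (nhds 0) := by
  have hl := gap_tendsto.const_mul (1 / P 0 1)
  rw [mul_zero] at hl
  have hξ1 : ξ ∈ Icc (0:ℝ) 1 := ⟨hξ.1, by linarith [hξ.2]⟩
  have hP : 0 < P 0 1 := P_zero_pos zero_le_one (by norm_num)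
  refine tendsto_of_tendsto_of_tendsto_of_le_of_le' tendsto_const_nhds hl ?_ ?_
  · filter_upwards [small_ev zero_lt_one] with δ ⟨hδ, hδ1⟩ using kerG_nonneg i hδ hδ1 hξ1
  · filter_upwards [small_ev (show (0:ℝ) < 1 / 4 by norm_num)] with δ ⟨hδ, hδ1⟩
    refine (kerG_le_exp i hδ (by linarith) hξ1).trans ?_
    refine mul_le_mul_of_nonneg_left (Real.exp_le_exp.2 ?_) (by positivity)
    linarith [A_gap_right hδ hδ1 hξ.1 hξ.2]

lemma Rzero_eq (h : ℝ → ℝ) : Rzero h = ∫ ξ in (1 / 2 : ℝ)..1, rho0 ξ * h ξ := by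
  unfold Rzero
  refine intervalIntegral.integral_congr_ae (Eventually.of_forall fun ξ hξ => ?_)
  rw [uIoc_of_le (by norm_num)] at hξ
  have hP : ∀ z ∈ Icc ξ 1, 0 < P 0 z := fun z hz =>
    P_zero_pos (by linarith [hξ.1, hz.1]) (by linarith [hξ.1, hz.1])
  have h1 := exp_ab (by linarith [hξ.1]) hξ.2 hP
  have h2 := hP ξ ⟨le_rfl, hξ.2⟩
  have h3 := hP 1 ⟨hξ.2, le_rfl⟩
  rw [Real.exp_neg, h1, rho0, Real.exp_neg, aF_eq]
  field_simp

lemma Rzero_eq' (h : ℝ → ℝ) :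
    Rzero h = ∫ ξ in (0:ℝ)..1, (Ioi (1 / 2 : ℝ)).indicator (fun ξ => rho0 ξ * h ξ) ξ := by
  rw [Rzero_eq, intervalIntegral.integral_of_le zero_le_one,
    intervalIntegral.integral_of_le (by norm_num), setIntegral_indicator measurableSet_Ioi]
  congr 2
  ext x
  simp only [mem_Ioc, mem_inter_iff, mem_Ioi]
  constructor
  · rintro ⟨h1, h2⟩; exact ⟨⟨by linarith, h2⟩, h1⟩
  · rintro ⟨⟨_, h2⟩, h1⟩; exact ⟨h1, h2⟩

lemma int_of_bdd {f : ℝ → ℝ} (hf : Measurable f) {a b C : ℝ} (hab : a ≤ b)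
    (h : ∀ x ∈ Icc a b, |f x| ≤ C) : IntervalIntegrable f volume a b := by
  rw [intervalIntegrable_iff_integrableOn_Ioc_of_le hab]
  refine Measure.integrableOn_of_bounded (M := C) (by simp) hf.aestronglyMeasurable ?_
  filter_upwards [ae_restrict_mem measurableSet_Ioc] with x hx
  exact h x (Ioc_subset_Icc_self hx)

lemma kerG_mul_le (i : ℕ) {δ : ℝ} (hδ : 0 < δ) (hδ1 : δ ≤ 1) {ξ : ℝ} (hξ : ξ ∈ Icc (0:ℝ) 1)
    {t C : ℝ} (ht : |t| ≤ C) : |kerG i δ ξ * t| ≤ 1 / P 0 1 * C := by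
  rw [abs_mul, abs_of_nonneg (kerG_nonneg i hδ hδ1 hξ)]
  exact mul_le_mul (kerG_le i hδ hδ1 hξ) ht (abs_nonneg _)
    (one_div_nonneg.2 (P_zero_nonneg zero_le_one))

/-- Convergence of the normalized functional at a fixed bounded argument. -/
lemma functional_tendsto (i : ℕ) {g : ℝ → ℝ} (hg : Measurable g) {C : ℝ}
    (hC : ∀ x ∈ Icc (0:ℝ) 1, |g x| ≤ C) :
    Tendsto (fun δ => ∫ ξ in (0:ℝ)..1, kerG i δ ξ * g ξ) (nhdsWithin 0 (Ioi 0))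
      (nhds (Rzero g)) := by
  rw [Rzero_eq']
  refine intervalIntegral.tendsto_integral_filter_of_dominated_convergence
    (fun _ => 1 / P 0 1 * C)
    (Eventually.of_forall fun δ => ((kerG_meas i δ).mul hg).aestronglyMeasurable) ?_
    intervalIntegrable_const ?_
  · filter_upwards [small_ev zero_lt_one] with δ ⟨hδ, hδ1⟩
    refine Eventually.of_forall fun ξ hξ => ?_
    rw [uIoc_of_le zero_le_one] at hξ
    have hξ' := Ioc_subset_Icc_self hξ
    exact kerG_mul_le i hδ hδ1 hξ' (hC ξ hξ')
  · refine Eventually.of_forall fun ξ hξ => ?_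
    rw [uIoc_of_le zero_le_one] at hξ
    by_cases h : 1 / 2 < ξ
    · rw [indicator_of_mem (show ξ ∈ Ioi (1 / 2 : ℝ) from h)]
      exact (kerG_tendsto_right i ⟨h, hξ.2⟩).mul_const _
    · rw [indicator_of_notMem (show ξ ∉ Ioi (1 / 2 : ℝ) from h)]
      simpa using (kerG_tendsto_left i ⟨hξ.1.le, not_lt.1 h⟩).mul_const (g ξ)

/-- The convergence is uniform over small sup-norm balls around `g`. -/
lemma functional_unif (i : ℕ) {g : ℝ → ℝ} (hg : Measurable g) {C : ℝ}
    (hC : ∀ x ∈ Icc (0:ℝ) 1, |g x| ≤ C) {κ : ℝ} (hκ : 0 < κ) :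
    ∃ δ₀ μ : ℝ, 0 < δ₀ ∧ 0 < μ ∧ ∀ δ ∈ Ioc 0 δ₀, ∀ h : ℝ → ℝ, Measurable h →
      (∀ x ∈ Icc (0:ℝ) 1, |h x - g x| ≤ μ) →
        |(∫ ξ in (0:ℝ)..1, kerG i δ ξ * h ξ) - Rzero g| < κ := by
  have hP : 0 < P 0 1 := P_zero_pos zero_le_one (by norm_num)
  have h1 := (Metric.tendsto_nhds.1 (functional_tendsto i hg hC)) (κ / 2) (by positivity)
  obtain ⟨δ₁, hδ₁, h2⟩ := mem_nhdsGT_iff_exists_Ioc_subset.1 h1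
  refine ⟨min δ₁ 1, P 0 1 * (κ / 2), lt_min hδ₁ one_pos, by positivity, ?_⟩
  intro δ hδ h hm hh
  have hδ0 := hδ.1
  have hδ1 : δ ≤ 1 := hδ.2.trans (min_le_right _ _)
  have h3 : |(∫ ξ in (0:ℝ)..1, kerG i δ ξ * g ξ) - Rzero g| < κ / 2 :=
    h2 ⟨hδ0, hδ.2.trans (min_le_left _ _)⟩
  have hhb : ∀ x ∈ Icc (0:ℝ) 1, |h x| ≤ P 0 1 * (κ / 2) + C := fun x hx => by
    have := abs_add_le (h x - g x) (g x)
    rw [sub_add_cancel] at this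
    linarith [hh x hx, hC x hx]
  have ih : IntervalIntegrable (fun ξ => kerG i δ ξ * h ξ) volume 0 1 :=
    int_of_bdd ((kerG_meas i δ).mul hm) zero_le_one
      fun x hx => kerG_mul_le i hδ0 hδ1 hx (hhb x hx)
  have ig : IntervalIntegrable (fun ξ => kerG i δ ξ * g ξ) volume 0 1 :=
    int_of_bdd ((kerG_meas i δ).mul hg) zero_le_one
      fun x hx => kerG_mul_le i hδ0 hδ1 hx (hC x hx)
  have h4 : |(∫ ξ in (0:ℝ)..1, kerG i δ ξ * h ξ) - ∫ ξ in (0:ℝ)..1, kerG i δ ξ * g ξ|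
      ≤ κ / 2 := by
    rw [← intervalIntegral.integral_sub ih ig]
    have := intervalIntegral.norm_integral_le_of_norm_le_const (a := (0:ℝ)) (b := 1)
      (C := 1 / P 0 1 * (P 0 1 * (κ / 2)))
      (f := fun ξ => kerG i δ ξ * h ξ - kerG i δ ξ * g ξ) fun x hx => by
        rw [uIoc_of_le zero_le_one] at hx
        have hx' := Ioc_subset_Icc_self hx
        rw [← mul_sub]
        exact kerG_mul_le i hδ0 hδ1 hx' (hh x hx')
    rw [Real.norm_eq_abs] at this
    refine this.trans (le_of_eq ?_)
    rw [sub_zero, abs_one, mul_one]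
    field_simp
  have := abs_sub_le (∫ ξ in (0:ℝ)..1, kerG i δ ξ * h ξ)
    (∫ ξ in (0:ℝ)..1, kerG i δ ξ * g ξ) (Rzero g)
  linarith

/-! ### The LSW profile and its self-convolution -/

lemma bF0_nonneg {z : ℝ} (hz : 1 / 4 ≤ z) : 0 ≤ bF 0 z := by
  have hz0 : 0 ≤ z := by linarith
  have e : z ^ (-(2:ℝ)/3) = ((z ^ ((1:ℝ)/3)) ^ 2)⁻¹ := by
    rw [← Real.rpow_natCast, ← Real.rpow_mul hz0, ← Real.rpow_neg hz0]
    norm_num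
  have h2 := cbrt_cube hz0
  have h3 := cc_cube
  have hv : 0 < z ^ ((1:ℝ)/3) := Real.rpow_pos_of_pos (by linarith) _
  unfold bF
  rw [e, lam_eq]
  set v := z ^ ((1:ℝ)/3)
  have key : cc ^ 2 ≤ 2 * v ^ 2 := by
    by_contra! hlt
    have h5 := pow_lt_pow_left₀ hlt (by positivity) (by norm_num : 3 ≠ 0)
    have h6 : (2 * v ^ 2) ^ 3 = 8 * z ^ 2 := by rw [← h2]; ring
    have h7 : (cc ^ 2) ^ 3 = 1 / 4 := by
      rw [← pow_mul, mul_comm, pow_mul, h3]; norm_num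
    rw [h6, h7] at h5
    nlinarith
  have : cc ^ 2 * (v ^ 2)⁻¹ ≤ 2 := by
    rw [← div_eq_mul_inv, div_le_iff₀ (by positivity)]; exact key
  linarith

lemma aF0_nonneg {z : ℝ} (hz : 0 ≤ z) : 0 ≤ aF 0 z := one_div_nonneg.2 (P_zero_nonneg hz)

/-- The exponent of the profile is bounded below: only the part of the integral over `[0, 1/4]` can
be negative. If the integrand is not integrable, which happens only for `z ≥ 1/2`,
the integral is `0` by convention. -/
lemma expo_lower {z : ℝ} (hz0 : 0 ≤ z) :
    -(∫ y in (0:ℝ)..(1 / 4), |aF 0 y * bF 0 y|) ≤ ∫ y in (0:ℝ)..z, aF 0 y * bF 0 y := by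
  have hq : (0:ℝ) ≤ 1 / 4 := by norm_num
  have hM : 0 ≤ ∫ y in (0:ℝ)..(1 / 4), |aF 0 y * bF 0 y| :=
    intervalIntegral.integral_nonneg hq fun y _ => abs_nonneg _
  have i4 : IntervalIntegrable (fun y => aF 0 y * bF 0 y) volume 0 (1 / 4) :=
    ab_int hq fun y hy => P_zero_pos hy.1 (by linarith [hy.2])
  by_cases hi : IntervalIntegrable (fun y => aF 0 y * bF 0 y) volume 0 z
  swap
  · rw [intervalIntegral.integral_undef hi]; linarith
  rcases le_total z (1 / 4) with h | h
  · have h1 := intervalIntegral.abs_integral_le_integral_abs (μ := volume) hz0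
      (f := fun y => aF 0 y * bF 0 y)
    have h2 : ∫ y in (0:ℝ)..z, |aF 0 y * bF 0 y| ≤ ∫ y in (0:ℝ)..(1 / 4), |aF 0 y * bF 0 y| :=
      intervalIntegral.integral_mono_interval le_rfl hz0 h
        (Eventually.of_forall fun y => abs_nonneg _) i4.abs
    linarith [neg_abs_le (∫ y in (0:ℝ)..z, aF 0 y * bF 0 y)]
  · have h1 := intervalIntegral.abs_integral_le_integral_abs (μ := volume) hq
      (f := fun y => aF 0 y * bF 0 y)
    have h2 : 0 ≤ ∫ y in (1 / 4 : ℝ)..z, aF 0 y * bF 0 y :=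
      intervalIntegral.integral_nonneg h fun y hy =>
        mul_nonneg (aF0_nonneg (hq.trans hy.1)) (bF0_nonneg hy.1)
    rw [← intervalIntegral.integral_interval_sub_left hi i4] at h2
    linarith [neg_abs_le (∫ y in (0:ℝ)..(1 / 4), aF 0 y * bF 0 y)]

lemma prof_meas : Measurable fun z => Real.exp (-∫ y in (0:ℝ)..z, aF 0 y * bF 0 y) :=
  (meas_primitive' 0 ((aF_meas 0).mul (bF_meas 0))).neg.exp

lemma prof_le {z : ℝ} (hz0 : 0 ≤ z) :
    Real.exp (-∫ y in (0:ℝ)..z, aF 0 y * bF 0 y)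
      ≤ Real.exp (∫ y in (0:ℝ)..(1 / 4), |aF 0 y * bF 0 y|) :=
  Real.exp_le_exp.2 (by linarith [expo_lower hz0])

lemma prof_mass_pos :
    0 < ∫ t in (0:ℝ)..(1/2 : ℝ), t * Real.exp (-∫ y in (0:ℝ)..t, aF 0 y * bF 0 y) := by
  refine intervalIntegral.intervalIntegral_pos_of_pos_on
    (int_of_bdd (C := 1 * Real.exp (∫ y in (0:ℝ)..(1 / 4), |aF 0 y * bF 0 y|))
      (measurable_id.mul prof_meas) (by norm_num) fun x hx => ?_)
    (fun x hx => mul_pos hx.1 (Real.exp_pos _)) (by norm_num)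
  simp only [Pi.mul_apply, id]
  rw [abs_mul, abs_of_nonneg hx.1, abs_of_pos (Real.exp_pos _)]
  exact mul_le_mul (by linarith [hx.2]) (prof_le hx.1) (Real.exp_pos _).le zero_le_one

lemma Phi_meas : Measurable PhiLSW :=
  Measurable.ite measurableSet_Iic (prof_meas.div_const _) measurable_const

lemma Phi_pos {z : ℝ} (hz : z ≤ 1 / 2) : 0 < PhiLSW z := by
  unfold PhiLSW
  rw [if_pos hz]
  exact div_pos (Real.exp_pos _) prof_mass_pos

lemma Phi_nonneg (z : ℝ) : 0 ≤ PhiLSW z := by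
  by_cases hz : z ≤ 1 / 2
  · exact (Phi_pos hz).le
  · unfold PhiLSW; rw [if_neg hz]

lemma Phi_bdd : ∃ B : ℝ, 0 ≤ B ∧ ∀ z, 0 ≤ z → PhiLSW z ≤ B := by
  refine ⟨Real.exp (∫ y in (0:ℝ)..(1 / 4), |aF 0 y * bF 0 y|) /
    ∫ t in (0:ℝ)..(1/2 : ℝ), t * Real.exp (-∫ y in (0:ℝ)..t, aF 0 y * bF 0 y),
    div_nonneg (Real.exp_pos _).le prof_mass_pos.le, fun z hz0 => ?_⟩
  unfold PhiLSW
  split_ifs with hz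
  · exact div_le_div_of_nonneg_right (prof_le hz0) prof_mass_pos.le
  · exact div_nonneg (Real.exp_pos _).le prof_mass_pos.le

lemma conv_meas : Measurable (conv PhiLSW PhiLSW) := by
  unfold conv
  refine (meas_primitive 0 (F := fun z y => PhiLSW (z - y) * PhiLSW y) ?_).const_mul _
  exact (Phi_meas.comp (measurable_fst.sub measurable_snd)).mul (Phi_meas.comp measurable_snd)

lemma conv_integrand_le {B : ℝ} (hB : 0 ≤ B) (h : ∀ z, 0 ≤ z → PhiLSW z ≤ B) {z y : ℝ}
    (hy : y ∈ Icc 0 z) : |PhiLSW (z - y) * PhiLSW y| ≤ B * B := by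
  rw [abs_of_nonneg (mul_nonneg (Phi_nonneg _) (Phi_nonneg _))]
  exact mul_le_mul (h _ (by linarith [hy.2])) (h _ hy.1) (Phi_nonneg _) hB

lemma conv_bdd : ∃ C : ℝ, ∀ z ∈ Icc (0:ℝ) 1, |conv PhiLSW PhiLSW z| ≤ C := by
  obtain ⟨B, hB, h⟩ := Phi_bdd
  refine ⟨B * B, fun z hz => ?_⟩
  have := intervalIntegral.norm_integral_le_of_norm_le_const (a := (0:ℝ)) (b := z)
    (C := B * B) (f := fun y => PhiLSW (z - y) * PhiLSW y) fun y hy => by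
      rw [uIoc_of_le hz.1] at hy
      exact conv_integrand_le hB h (Ioc_subset_Icc_self hy)
  rw [Real.norm_eq_abs, sub_zero, abs_of_nonneg hz.1] at this
  unfold conv
  rw [abs_mul, abs_of_pos (by norm_num : (0:ℝ) < 1 / 2)]
  nlinarith [mul_le_mul_of_nonneg_left hz.2 (mul_nonneg hB hB), mul_nonneg hB hB]

lemma conv_pos {z : ℝ} (hz : 1 / 2 < z) (hz1 : z < 1) : 0 < conv PhiLSW PhiLSW z := by
  obtain ⟨B, hB, h⟩ := Phi_bdd
  have hm : Measurable fun y => PhiLSW (z - y) * PhiLSW y :=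
    (Phi_meas.comp (measurable_const.sub measurable_id)).mul Phi_meas
  have i1 : IntervalIntegrable (fun y => PhiLSW (z - y) * PhiLSW y) volume 0 z :=
    int_of_bdd hm (by linarith) fun y hy => conv_integrand_le hB h hy
  -- Both factors are positive exactly when `z - 1/2 ≤ y ≤ 1/2`.
  have h1 : 0 < ∫ y in (z - 1 / 2)..(1 / 2), PhiLSW (z - y) * PhiLSW y := by
    refine intervalIntegral.intervalIntegral_pos_of_pos_on
      (int_of_bdd hm (by linarith) fun y hy => conv_integrand_le hB h
        ⟨by linarith [hy.1], by linarith [hy.2]⟩) (fun y hy => ?_) (by linarith)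
    exact mul_pos (Phi_pos (by linarith [hy.1])) (Phi_pos hy.2.le)
  have h2 := intervalIntegral.integral_mono_interval (μ := volume)
    (show (0:ℝ) ≤ z - 1 / 2 by linarith) (show z - 1 / 2 ≤ 1 / 2 by linarith) hz.le
    (Eventually.of_forall fun y => mul_nonneg (Phi_nonneg (z - y)) (Phi_nonneg y)) i1
  unfold conv
  linarith

lemma rho0_meas : Measurable rho0 := by
  have e : rho0 = fun ξ => ξ / P 0 1 * Real.exp (∫ y in (1:ℝ)..ξ, aF 0 y) := by
    funext ξ
    rw [rho0, intervalIntegral.integral_symm, neg_neg]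
  rw [e]
  exact (measurable_id.div_const _).mul (meas_primitive' 1 (aF_meas 0)).exp

lemma Rzero_pos : 0 < Rzero (conv PhiLSW PhiLSW) := by
  obtain ⟨C, hC⟩ := conv_bdd
  have hP : 0 < P 0 1 := P_zero_pos zero_le_one (by norm_num)
  rw [Rzero_eq]
  refine intervalIntegral.intervalIntegral_pos_of_pos_on
    (int_of_bdd (C := 1 / P 0 1 * C) (rho0_meas.mul conv_meas) (by norm_num) fun ξ hξ => ?_)
    (fun ξ hξ => ?_) (by norm_num)
  · have h0 : 0 ≤ ξ := by linarith [hξ.1]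
    have h1 : Real.exp (-∫ y in ξ..(1:ℝ), aF 0 y) ≤ 1 := by
      rw [Real.exp_le_one_iff, neg_nonpos]
      exact intervalIntegral.integral_nonneg hξ.2 fun y hy => aF0_nonneg (h0.trans hy.1)
    have h2 : 0 ≤ rho0 ξ := by unfold rho0; positivity
    have h3 : rho0 ξ ≤ 1 / P 0 1 := by
      unfold rho0
      exact (mul_le_of_le_one_right (by positivity) h1).trans
        (div_le_div_of_nonneg_right hξ.2 hP.le)
    rw [Pi.mul_apply, abs_mul, abs_of_nonneg h2]
    exact mul_le_mul h3 (hC ξ ⟨h0, hξ.2⟩) (abs_nonneg _) (by positivity)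
  · refine mul_pos ?_ (conv_pos hξ.1 hξ.2)
    have : 0 < ξ := by linarith [hξ.1]
    unfold rho0
    positivity

/-! ### Relative errors -/

lemma abs_le_normZ {β₁ β₂ : ℝ} {f : ℝ → ℝ} (hf : BddAbove ((fun z => |f z|) '' Icc (0:ℝ) 1))
    {z : ℝ} (hz : z ∈ Icc (0:ℝ) 1) : |f z| ≤ normZ β₁ β₂ f := by
  have h1 : |f z| ≤ normSup f := le_csSup hf (mem_image_of_mem _ hz)
  have h2 : 0 ≤ normTail β₁ β₂ f := by
    refine Real.sSup_nonneg ?_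
    rintro _ ⟨x, hx, rfl⟩
    have : (0:ℝ) ≤ x := zero_le_one.trans hx
    positivity
  unfold normZ
  linarith

/-- Continuity of the two ratios at `(R, R)`. -/
lemma ratio_cont {R η : ℝ} (hR : 0 < R) (hη : 0 < η) :
    ∃ κ : ℝ, 0 < κ ∧ ∀ x y : ℝ, |x - R| < κ → |y - R| < κ →
      0 < x ∧ |R / x - 1| ≤ η ∧ |R * y / x ^ 2 - 1| ≤ η := by
  have c1 : ContinuousAt (fun p : ℝ × ℝ => R / p.1) (R, R) :=
    continuousAt_const.div continuousAt_fst hR.ne'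
  have c2 : ContinuousAt (fun p : ℝ × ℝ => R * p.2 / p.1 ^ 2) (R, R) :=
    (continuousAt_const.mul continuousAt_snd).div (continuousAt_fst.pow 2)
      (pow_ne_zero 2 hR.ne')
  obtain ⟨κ₁, hκ₁, h1⟩ := Metric.continuousAt_iff.1 c1 η hη
  obtain ⟨κ₂, hκ₂, h2⟩ := Metric.continuousAt_iff.1 c2 η hη
  refine ⟨min R (min κ₁ κ₂), lt_min hR (lt_min hκ₁ hκ₂), fun x y hx hy => ?_⟩
  have hd : dist (x, y) (R, R) < min κ₁ κ₂ := by
    rw [Prod.dist_eq]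
    exact max_lt (hx.trans_le (min_le_right _ _)) (hy.trans_le (min_le_right _ _))
  have e1 : R / R = 1 := div_self hR.ne'
  have e2 : R * R / R ^ 2 = 1 := by rw [← sq]; exact div_self (pow_ne_zero 2 hR.ne')
  have a1 := h1 (hd.trans_le (min_le_left _ _))
  have a2 := h2 (hd.trans_le (min_le_right _ _))
  rw [Real.dist_eq] at a1 a2
  simp only [e1, e2] at a1 a2
  refine ⟨?_, a1.le, a2.le⟩
  have := (abs_lt.1 (hx.trans_le (min_le_left _ _))).1
  linarith

/-- asymptotics of the approximate parameters ε_app and ε̃_app. -/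
theorem stmt19 (β₁ β₂ : ℝ) (hβ₁ : 0 < β₁) (hβ₂ : 1 < β₂) :
    ∀ η : ℝ, 0 < η → ∃ δ₀ μ : ℝ, 0 < δ₀ ∧ 0 < μ ∧
      ∀ δ ∈ Ioc (0:ℝ) δ₀, ∀ h : ℝ → ℝ, memZ β₁ β₂ h →
        normZ β₁ β₂ (fun z => h z - conv PhiLSW PhiLSW z) ≤ μ →
        |1 / Ghat 1 δ h - 1 / (Kc 1 δ * Rzero (conv PhiLSW PhiLSW))| ≤
            η * (1 / (Kc 1 δ * Rzero (conv PhiLSW PhiLSW))) ∧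
        |Ghat 2 δ h / (Ghat 1 δ h) ^ 2 -
              (1 / (Kc 1 δ * Rzero (conv PhiLSW PhiLSW))) * Kc 2 δ / Kc 1 δ| ≤
            η * ((1 / (Kc 1 δ * Rzero (conv PhiLSW PhiLSW))) * Kc 2 δ / Kc 1 δ) := by
  intro η hη
  obtain ⟨C, hC⟩ := conv_bdd
  have hR := Rzero_pos
  obtain ⟨κ, hκ, hrat⟩ := ratio_cont hR hη
  obtain ⟨d₁, μ₁, hd₁, hμ₁, H₁⟩ := functional_unif 1 conv_meas hC hκ
  obtain ⟨d₂, μ₂, hd₂, hμ₂, H₂⟩ := functional_unif 2 conv_meas hC hκ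
  refine ⟨min (min d₁ d₂) 1, min μ₁ μ₂, lt_min (lt_min hd₁ hd₂) one_pos, lt_min hμ₁ hμ₂, ?_⟩
  intro δ hδ h hh hn
  have hδ0 := hδ.1
  have hδ1 : δ ≤ 1 := hδ.2.trans (min_le_right _ _)
  have hδd := hδ.2.trans (min_le_left _ _)
  -- The supremum in `normSup` dominates pointwise values only because the set is bounded.
  have hbdd : BddAbove ((fun z => |h z - conv PhiLSW PhiLSW z|) '' Icc (0:ℝ) 1) := by
    obtain ⟨D, hD⟩ := hh.2.1
    refine ⟨D + C, ?_⟩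
    rintro _ ⟨x, hx, rfl⟩
    exact (abs_sub _ _).trans (add_le_add (hD (mem_image_of_mem _ hx)) (hC x hx))
  have hsup : ∀ x ∈ Icc (0:ℝ) 1, |h x - conv PhiLSW PhiLSW x| ≤ min μ₁ μ₂ := fun x hx =>
    (abs_le_normZ (β₁ := β₁) (β₂ := β₂) hbdd hx).trans hn
  have x1 := H₁ δ ⟨hδ0, hδd.trans (min_le_left _ _)⟩ h hh.1
    fun x hx => (hsup x hx).trans (min_le_left _ _)
  have x2 := H₂ δ ⟨hδ0, hδd.trans (min_le_right _ _)⟩ h hh.1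
    fun x hx => (hsup x hx).trans (min_le_right _ _)
  obtain ⟨hx, r1, r2⟩ := hrat _ _ x1 x2
  have k1 := Kc_pos 1 hδ0 hδ1
  have k2 := Kc_pos 2 hδ0 hδ1
  rw [Ghat_eq 1 hδ0 hδ1, Ghat_eq 2 hδ0 hδ1]
  generalize (∫ ξ in (0:ℝ)..1, kerG 1 δ ξ * h ξ) = x at *
  generalize (∫ ξ in (0:ℝ)..1, kerG 2 δ ξ * h ξ) = y at *
  generalize Rzero (conv PhiLSW PhiLSW) = R at *
  generalize Kc 1 δ = K₁ at *
  generalize Kc 2 δ = K₂ at *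
  constructor
  · have e : 1 / (K₁ * x) - 1 / (K₁ * R) = (R / x - 1) * (1 / (K₁ * R)) := by
      field_simp
    rw [e, abs_mul, abs_of_pos (show 0 < 1 / (K₁ * R) by positivity)]
    exact mul_le_mul_of_nonneg_right r1 (by positivity)
  · have e : K₂ * y / (K₁ * x) ^ 2 - 1 / (K₁ * R) * K₂ / K₁
        = (R * y / x ^ 2 - 1) * (1 / (K₁ * R) * K₂ / K₁) := by
      field_simp
    rw [e, abs_mul, abs_of_pos (show 0 < 1 / (K₁ * R) * K₂ / K₁ by positivity)]
    exact mul_le_mul_of_nonneg_right r2 (by positivity)
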